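/- The generating function of Kreweras excursions F(t;0,0) = Σ_{n≥0} f(n;0,0) tⁿ ∈ ℚ[[t]] is a root of the polynomial 64t⁶T³ + 16t³T² + (1 − 72t³)T + 54t³ − 1; that is, 64t⁶·F(t;0,0)³ + 16t³·F(t;0,0)² + (1 − 72t³)·F(t;0,0) + 54t³ − 1 = 0 in ℚ[[t]]. -/

import Mathlib

/-!
The proof is the Tutte-invariant argument for Kreweras walks, followed by an explicit solution of the
resulting equation with one catalytic variable.

* Removing the last step gives the functional equation `K(x,y) F(x,y) = xy - t x F(x,0) - t y F(0,y)`
  with kernel `K = xy - t (x + y + x²y²)` (`functional_equation`), and `F(0,y)` is `F(y,0)` by the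
  symmetry `f_comm`.
* On `K = 0` one has `xy = 1/t - 1/x - 1/y`, so `I(x) = t x F(x,0) + 1/x - 1/(2t)` satisfies
  `I(x) = -I(y)` and `I²` is an invariant. Also `J(x) = t/x² - 1/x - t x` is an invariant, and
  `I² - J/t` has no pole at `x = 0`. Such an invariant is constant (`invariant_eq_zero`), which is the
  equation `x F(x,0) = x + 2t (F(x,0) - F(0,0)) + t² x² F(x,0)²` (`catalyticEq_axisGF`).
* That equation has a unique solution (`CatalyticEq.unique`), and one solution is explicit: with
  `U = 1 + 4t³U³` and `c = 1 + t² x U² c²` (so `c` is the Catalan series at `t² x U²`), it is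
  `U (c - 2t³U³c²)` (`exists_catalyticEq`). At `x = 0` this gives `F(0,0) = U (1 - 2t³U³)`, and
  eliminating `U` yields the cubic (`cubic_of_U`).

The series live in `ℚ⟦t⟧`, `ℚ⟦x⟧⟦t⟧` and `ℚ⟦x⟧⟦y⟧⟦t⟧`; `X` is always the outermost variable and `C`
embeds the coefficients.
-/


noncomputable section

/-- The set of admissible steps for Kreweras walks. -/
def krewerasSteps : Set (ℤ × ℤ) := {(-1, 0), (0, -1), (1, 1)}

/-- The position of the walk `w` after its first `k` steps. -/
def walkPos {n : ℕ} (w : Fin n → ℤ × ℤ) (k : ℕ) : ℤ × ℤ :=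
  ∑ m ∈ Finset.univ.filter (fun m : Fin n => (m : ℕ) < k), w m

/-- `w` is a Kreweras walk: every step is admissible and the walk (which starts
at the origin) never leaves the first quadrant. -/
def IsKrewerasWalk {n : ℕ} (w : Fin n → ℤ × ℤ) : Prop :=
  (∀ m, w m ∈ krewerasSteps) ∧ ∀ k ≤ n, 0 ≤ (walkPos w k).1 ∧ 0 ≤ (walkPos w k).2

/-- The number of Kreweras walks of length `n` ending at `(i, j)`. -/
def f (n : ℕ) (i j : ℤ) : ℕ :=
  Nat.card {w : Fin n → ℤ × ℤ // IsKrewerasWalk w ∧ walkPos w n = (i, j)}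

/-- The generating function `F(t;0,0)` of Kreweras excursions. -/
def KrewerasGF00 : PowerSeries ℚ := PowerSeries.mk fun n => (f n 0 0 : ℚ)

/-! ### Recurrence for the number of walks -/

lemma walkPos_castSucc {n : ℕ} (w : Fin (n + 1) → ℤ × ℤ) {k : ℕ} (hk : k ≤ n) :
    walkPos w k = walkPos (fun m : Fin n => w m.castSucc) k := by
  unfold walkPos
  rw [Finset.sum_filter, Finset.sum_filter, Fin.sum_univ_castSucc]
  simp [hk]

lemma walkPos_last {n : ℕ} (w : Fin (n + 1) → ℤ × ℤ) :
    walkPos w (n + 1) = walkPos (fun m : Fin n => w m.castSucc) n + w (Fin.last n) := by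
  unfold walkPos
  rw [Finset.sum_filter, Finset.sum_filter, Fin.sum_univ_castSucc]
  simp only [Fin.val_castSucc, Fin.val_last, Nat.lt_succ_self, if_true, Fin.is_lt]
  congr 1
  refine Finset.sum_congr rfl fun m _ => ?_
  rw [if_pos (by omega)]

lemma isKrewerasWalk_succ_iff {n : ℕ} (w : Fin (n + 1) → ℤ × ℤ) :
    IsKrewerasWalk w ↔ IsKrewerasWalk (fun m : Fin n => w m.castSucc) ∧
      w (Fin.last n) ∈ krewerasSteps ∧
      0 ≤ (walkPos w (n + 1)).1 ∧ 0 ≤ (walkPos w (n + 1)).2 := by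
  unfold IsKrewerasWalk
  rw [Fin.forall_fin_succ']
  constructor
  · rintro ⟨⟨h1, h2⟩, h3⟩
    refine ⟨⟨h1, fun k hk => ?_⟩, h2, h3 _ le_rfl⟩
    rw [← walkPos_castSucc w hk]
    exact h3 k (by omega)
  · rintro ⟨⟨h1, h3⟩, h2, h4⟩
    refine ⟨⟨h1, h2⟩, fun k hk => ?_⟩
    rcases Nat.lt_or_ge n k with h | h
    · obtain rfl : k = n + 1 := by omega
      exact h4
    · rw [walkPos_castSucc w h]
      exact h3 k h

/-- The three admissible steps, listed. -/
def krewerasStep : Fin 3 → ℤ × ℤ := ![(-1, 0), (0, -1), (1, 1)]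

lemma krewerasStep_injective : Function.Injective krewerasStep := by
  unfold krewerasStep
  decide

lemma mem_krewerasSteps_iff (p : ℤ × ℤ) : p ∈ krewerasSteps ↔ ∃ k, krewerasStep k = p := by
  simp [krewerasSteps, krewerasStep, Fin.exists_fin_succ, eq_comm]

/-- Kreweras walks of length `n` ending at `p`; `f n i j` is the cardinality at `p = (i, j)`. -/
abbrev KrewerasWalksTo (n : ℕ) (p : ℤ × ℤ) : Type :=
  {w : Fin n → ℤ × ℤ // IsKrewerasWalk w ∧ walkPos w n = p}

instance (n : ℕ) (p : ℤ × ℤ) : Finite (KrewerasWalksTo n p) := by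
  have hs : krewerasSteps.Finite := by simp [krewerasSteps]
  have : {w : Fin n → ℤ × ℤ | ∀ m, w m ∈ krewerasSteps}.Finite :=
    Set.Finite.pi' fun _ => hs
  exact (this.subset (t := {w | IsKrewerasWalk w ∧ walkPos w n = p})
    fun w hw => hw.1.1).to_subtype

/-- Appending a last step to a walk, as long as the endpoint lies in the quadrant. -/
def appendStep (n : ℕ) (p : ℤ × ℤ) (hp : 0 ≤ p.1 ∧ 0 ≤ p.2) :
    (Σ k : Fin 3, KrewerasWalksTo n (p - krewerasStep k)) → KrewerasWalksTo (n + 1) p :=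
  fun a => ⟨Fin.snoc (α := fun _ => ℤ × ℤ) a.2.1 (krewerasStep a.1), by
    obtain ⟨k, w, hw, hwp⟩ := a
    have hpos : walkPos (Fin.snoc (α := fun _ => ℤ × ℤ) w (krewerasStep k)) (n + 1) = p := by
      rw [walkPos_last]
      simp [hwp]
    refine ⟨?_, hpos⟩
    rw [isKrewerasWalk_succ_iff, hpos]
    refine ⟨by simpa using hw, ?_, hp⟩
    rw [mem_krewerasSteps_iff]
    exact ⟨k, by simp⟩⟩

lemma appendStep_bijective (n : ℕ) (p : ℤ × ℤ) (hp : 0 ≤ p.1 ∧ 0 ≤ p.2) :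
    Function.Bijective (appendStep n p hp) := by
  constructor
  · rintro ⟨k, w, hw⟩ ⟨k', w', hw'⟩ h
    have h' := congrArg Subtype.val h
    simp only [appendStep] at h'
    obtain ⟨h1, h2⟩ := Fin.snoc_injective2 h'
    obtain rfl := krewerasStep_injective h2
    subst h1
    rfl
  · rintro ⟨w, hw, hwp⟩
    rw [isKrewerasWalk_succ_iff] at hw
    obtain ⟨k, hk⟩ := (mem_krewerasSteps_iff _).1 hw.2.1
    refine ⟨⟨k, fun m => w m.castSucc, hw.1, ?_⟩, ?_⟩
    · rw [hk, ← hwp, walkPos_last]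
      simp
    · apply Subtype.ext
      simp only [appendStep, hk]
      exact Fin.snoc_init_self w

lemma f_succ (n : ℕ) (i j : ℤ) (hi : 0 ≤ i) (hj : 0 ≤ j) :
    f (n + 1) i j = f n (i + 1) j + f n i (j + 1) + f n (i - 1) (j - 1) := by
  have h := Nat.card_eq_of_bijective _ (appendStep_bijective n (i, j) ⟨hi, hj⟩)
  rw [Nat.card_sigma, Fin.sum_univ_three] at h
  simpa [krewerasStep, f] using h.symm

lemma f_zero (i j : ℤ) : f 0 i j = if i = 0 ∧ j = 0 then 1 else 0 := by
  unfold f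
  split_ifs with h
  · obtain ⟨rfl, rfl⟩ := h
    rw [Nat.card_eq_one_iff_unique]
    refine ⟨⟨fun a b => Subtype.ext (Subsingleton.elim _ _)⟩, ⟨⟨Fin.elim0, ?_⟩⟩⟩
    simp [IsKrewerasWalk, walkPos, Prod.ext_iff]
  · rw [Nat.card_eq_zero]
    left
    refine ⟨fun a => h ?_⟩
    have := a.2.2
    simp [walkPos, Prod.ext_iff] at this
    exact ⟨this.1.symm, this.2.symm⟩

lemma f_eq_zero_of_neg (n : ℕ) (i j : ℤ) (h : i < 0 ∨ j < 0) : f n i j = 0 := by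
  unfold f
  rw [Nat.card_eq_zero]
  left
  refine ⟨fun a => ?_⟩
  have h1 := a.2.1.2 n le_rfl
  rw [a.2.2] at h1
  simp only at h1
  omega

/-- The step set is symmetric under exchanging the coordinates. -/
lemma f_comm (n : ℕ) (i j : ℤ) : f n i j = f n j i := by
  induction n generalizing i j with
  | zero => simp only [f_zero, and_comm]
  | succ n ih =>
    by_cases h : i < 0 ∨ j < 0
    · rw [f_eq_zero_of_neg _ _ _ h, f_eq_zero_of_neg _ _ _ h.symm]
    · push Not at h
      rw [f_succ _ _ _ h.1 h.2, f_succ _ _ _ h.2 h.1, ih (i + 1) j, ih i (j + 1),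
        ih (i - 1) (j - 1)]
      omega

section

open PowerSeries

/-! ### Power series fixed points -/

lemma eq_zero_of_forall_X_pow_dvd {R : Type*} [CommRing R] {a : R⟦X⟧}
    (h : ∀ n : ℕ, (X : R⟦X⟧) ^ n ∣ a) : a = 0 := by
  ext n
  simpa using X_pow_dvd_iff.1 (h (n + 1)) n (Nat.lt_succ_self n)

/-- A map that contracts the `X`-adic distance on power series has a fixed point. -/
lemma exists_fixedPoint {R : Type*} [CommRing R] (Φ : R⟦X⟧ → R⟦X⟧)
    (hΦ : ∀ (n : ℕ) (a b : R⟦X⟧), X ^ n ∣ a - b → X ^ (n + 1) ∣ Φ a - Φ b) :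
    ∃ V, V = Φ V := by
  have hstep : ∀ n : ℕ, (X : R⟦X⟧) ^ n ∣ Φ^[n + 1] 0 - Φ^[n] 0 := by
    intro n
    induction n with
    | zero => simp
    | succ n ih =>
      rw [Function.iterate_succ_apply' Φ (n + 1), Function.iterate_succ_apply' Φ n]
      rw [Function.iterate_succ_apply' Φ n] at ih
      exact hΦ _ _ _ ih
  have hstab : ∀ m n : ℕ, m + 1 ≤ n → coeff m (Φ^[n] 0) = coeff m (Φ^[m + 1] 0) := by
    intro m n hmn
    induction n, hmn using Nat.le_induction with
    | base => rfl
    | succ n hn ih =>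
      rw [← ih, ← sub_eq_zero, ← map_sub]
      exact X_pow_dvd_iff.1 (hstep n) m (by omega)
  -- The limit of the iterates, read off coefficient by coefficient.
  let V : R⟦X⟧ := mk fun m => coeff m (Φ^[m + 1] 0)
  have hV : ∀ n : ℕ, X ^ n ∣ V - Φ^[n] 0 := by
    intro n
    rw [X_pow_dvd_iff]
    intro m hm
    rw [map_sub, coeff_mk, hstab m n (by omega), sub_self]
  refine ⟨V, sub_eq_zero.1 (eq_zero_of_forall_X_pow_dvd fun n => ?_)⟩
  have h1 := hΦ n _ _ (hV n)
  have h2 := hV (n + 1)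
  rw [Function.iterate_succ_apply'] at h2
  have h3 := dvd_sub h2 h1
  rw [sub_sub_sub_cancel_right] at h3
  exact (pow_dvd_pow X n.le_succ).trans h3

/-! ### The equation with one catalytic variable and its explicit solution -/

/-- The equation with one catalytic variable `x = C X` over `ℚ⟦x⟧⟦t⟧`,
`x P = x + 2t (P - P|_{x=0}) + t² x² P²`, satisfied by the generating function of Kreweras walks
ending on the horizontal axis. -/
def CatalyticEq (P : ℚ⟦X⟧⟦X⟧) : Prop :=
  C X * P = C X + 2 * X * (P - map C (map constantCoeff P)) + X ^ 2 * C X ^ 2 * P ^ 2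

/-- The catalytic equation determines its solution, one power of `t` at a time. -/
lemma CatalyticEq.unique {P Q : ℚ⟦X⟧⟦X⟧} (hP : CatalyticEq P) (hQ : CatalyticEq Q) : P = Q := by
  unfold CatalyticEq at hP hQ
  refine sub_eq_zero.1 (eq_zero_of_forall_X_pow_dvd fun n => ?_)
  induction n with
  | zero => simp
  | succ n ih =>
    obtain ⟨E, hE⟩ := ih
    have hE0 : map C (map constantCoeff P) - map C (map constantCoeff Q)
        = X ^ n * map C (map constantCoeff E) := by
      rw [← map_sub, ← map_sub, hE]
      simp
    have h : C X * (P - Q) =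
        X ^ (n + 1) * (2 * (E - map C (map constantCoeff E)) + X * C X ^ 2 * E * (P + Q)) := by
      linear_combination hP - hQ - 2 * X * hE0 + (2 * X + X ^ 2 * C X ^ 2 * (P + Q)) * hE
    have h' : X ^ (n + 1) ∣ C X * (P - Q) := ⟨_, h⟩
    rw [X_pow_dvd_iff] at h' ⊢
    intro m hm
    have := h' m hm
    rw [coeff_C_mul] at this
    exact (mul_eq_zero.1 this).resolve_left X_ne_zero

/-- `U` is `W / (2t)` in the classical parametrisation `W = t (2 + W³)`. -/
lemma exists_U : ∃ U : ℚ⟦X⟧, U = 1 + 4 * X ^ 3 * U ^ 3 := by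
  refine exists_fixedPoint (fun U => 1 + 4 * X ^ 3 * U ^ 3) ?_
  rintro n a b ⟨e, he⟩
  exact ⟨4 * X ^ 2 * e * (a ^ 2 + a * b + b ^ 2), by
    linear_combination 4 * X ^ 3 * (a ^ 2 + a * b + b ^ 2) * he⟩

lemma exists_catalan (y : ℚ⟦X⟧⟦X⟧) : ∃ c : ℚ⟦X⟧⟦X⟧, c = 1 + X ^ 2 * y * c ^ 2 := by
  refine exists_fixedPoint (fun c => 1 + X ^ 2 * y * c ^ 2) ?_
  rintro n a b ⟨e, he⟩
  exact ⟨X * y * e * (a + b), by linear_combination X ^ 2 * y * (a + b) * he⟩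

/-- The explicit solution `P = U (c - 2 t³ U³ c²)` of the catalytic equation, where
`c = 1 + t² x U² c²`, and hence `P|_{x=0} = U (1 - 2 t³ U³)` because `c|_{x=0} = 1`. -/
lemma exists_catalyticEq {U : ℚ⟦X⟧} (hU : U = 1 + 4 * X ^ 3 * U ^ 3) :
    ∃ P, CatalyticEq P ∧ map constantCoeff P = U * (1 - 2 * X ^ 3 * U ^ 3) := by
  obtain ⟨c, hc⟩ := exists_catalan (C X * map C U ^ 2)
  have hc0 : map constantCoeff c = 1 := by
    rw [hc]
    simp
  have hmap : ∀ S : ℚ⟦X⟧, map constantCoeff (map (C (R := ℚ)) S) = S := by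
    intro S
    ext
    simp
  have hP0 : map constantCoeff (map C U * (c - 2 * X ^ 3 * map C U ^ 3 * c ^ 2))
      = U * (1 - 2 * X ^ 3 * U ^ 3) := by
    simp only [map_mul, map_sub, map_pow, map_X, map_ofNat, hc0, hmap]
    ring
  refine ⟨map C U * (c - 2 * X ^ 3 * map C U ^ 3 * c ^ 2), ?_, hP0⟩
  unfold CatalyticEq
  rw [hP0]
  have hU' := congrArg (map (C (R := ℚ))) hU
  simp only [map_mul, map_add, map_sub, map_pow, map_one, map_X, map_ofNat] at hU' ⊢
  set u := map (C (R := ℚ)) U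
  set q : ℚ⟦X⟧⟦X⟧ := 2 * X ^ 3 * u ^ 3 with hq
  linear_combination (C X * c * (1 - q * c)) * hU'
    + (C X * (1 - q * c) ^ 2 - 2 * X * u * (1 - q * (c + 1))) * hc

/-- Elimination of `U` between `U = 1 + 4t³U³` and `T = U (1 - 2t³U³)`, i.e. `2T = U (3 - U)`. -/
lemma cubic_of_U {U T : ℚ⟦X⟧} (hU : U = 1 + 4 * X ^ 3 * U ^ 3)
    (hT : T = U * (1 - 2 * X ^ 3 * U ^ 3)) :
    64 * X ^ 6 * T ^ 3 + 16 * X ^ 3 * T ^ 2 + (1 - 72 * X ^ 3) * T + 54 * X ^ 3 - 1 = 0 := by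
  have h0 : 2 * T = U * (3 - U) := by linear_combination 2 * hT + U * hU
  have h2 : (2 : ℚ⟦X⟧) *
      (64 * X ^ 6 * T ^ 3 + 16 * X ^ 3 * T ^ 2 + (1 - 72 * X ^ 3) * T + 54 * X ^ 3 - 1) = 0 := by
    linear_combination (16 * X ^ 6 * ((2 * T) ^ 2 + 2 * T * (U * (3 - U)) + (U * (3 - U)) ^ 2)
      + 8 * X ^ 3 * (2 * T + U * (3 - U)) + (1 - 72 * X ^ 3)) * h0
      - (4 * X ^ 3 * (3 - U) ^ 3 + (U - 2)) * hU
  exact (mul_eq_zero.1 h2).resolve_left fun h => by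
    have := congrArg (constantCoeff (R := ℚ)) h
    rw [map_ofNat, map_zero] at this
    norm_num at this

/-! ### The functional equation and the invariant -/

/-- `F_n(x, 0) = ∑ᵢ f(n; i, 0) xⁱ`. -/
def axisSlice (n : ℕ) : ℚ⟦X⟧ := mk fun i => (f n i 0 : ℚ)

/-- `F_n(x, y) = ∑ᵢⱼ f(n; i, j) xⁱ yʲ` in `ℚ⟦x⟧⟦y⟧`: the outer variable is `y = X` and the inner one
is `x = C X`. -/
def quadrantSlice (n : ℕ) : ℚ⟦X⟧⟦X⟧ := mk fun j => mk fun i => (f n i j : ℚ)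

lemma coeff_succ_natCast (k i : ℕ) : coeff (i + 1) (k : ℚ⟦X⟧) = 0 := by
  rw [← map_natCast (C (R := ℚ)), coeff_succ_C]

lemma quadrantSlice_zero : quadrantSlice 0 = 1 := by
  ext j i
  rcases j with _ | j <;> rcases i with _ | i <;>
    simp [quadrantSlice, f_zero, coeff_one]

lemma f_succ_cast (n i j : ℕ) : (f (n + 1) i j : ℚ)
    = f n ((i : ℤ) + 1) j + f n i ((j : ℤ) + 1) + f n ((i : ℤ) - 1) ((j : ℤ) - 1) := by
  rw [f_succ n i j (by positivity) (by positivity)]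
  push_cast
  rfl

/-- The last-step decomposition, multiplied by `xy`. -/
lemma quadrantSlice_succ (n : ℕ) :
    C X * X * quadrantSlice (n + 1) =
      (C X + X + (C X * X) ^ 2) * quadrantSlice n
        - C X * C (axisSlice n) - X * map C (axisSlice n) := by
  have h : C X * (X * quadrantSlice (n + 1)) + C X * C (axisSlice n) + X * map C (axisSlice n) =
      C X * quadrantSlice n + X * quadrantSlice n
        + C X * (C X * (X * (X * quadrantSlice n))) := by
    ext j i
    simp only [map_add, coeff_C_mul]
    rcases j with _ | _ | j <;> rcases i with _ | _ | i <;>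
      simp [coeff_succ_X_mul, coeff_zero_X_mul, quadrantSlice, axisSlice, f_succ_cast,
        f_eq_zero_of_neg, f_comm n 0, coeff_succ_natCast,
        coeff_succ_natCast _ 0] <;> ring_nf
  linear_combination h

/-- `F(x, 0) ∈ ℚ⟦x⟧⟦t⟧`. -/
def axisGF : ℚ⟦X⟧⟦X⟧ := mk axisSlice

/-- `F(x, y) ∈ ℚ⟦x⟧⟦y⟧⟦t⟧`. -/
def quadrantGF : ℚ⟦X⟧⟦X⟧⟦X⟧ := mk quadrantSlice

lemma map_constantCoeff_axisGF : map constantCoeff axisGF = KrewerasGF00 := by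
  ext n
  simp [axisGF, axisSlice, KrewerasGF00]

/-- The functional equation `xy F(x,y) = xy + t ((x + y + x²y²) F(x,y) - x F(x,0) - y F(0,y))`,
where `F(0,y)` is `F(x,0)` with `x` renamed to `y`. -/
lemma functional_equation :
    C (C X * X) * quadrantGF = C (C X * X) + X * (C (C X + X + (C X * X) ^ 2) * quadrantGF
      - C (C X) * map C axisGF - C X * map (map C) axisGF) := by
  ext1 n
  rcases n with _ | n
  · simp [quadrantGF, quadrantSlice_zero]
  · -- Only the coefficient map is distributed; the embedding `C` of coefficients stays intact.
    simp only [LinearMap.map_add, coeff_succ_X_mul, LinearMap.map_sub, coeff_C_mul, coeff_map,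
      quadrantGF, axisGF, coeff_mk, coeff_C, quadrantSlice_succ, Nat.succ_ne_zero,
      if_false, zero_add]

/-- An invariant without constant term vanishes. If `xy (L(x) - L(y))` is a multiple `K N` of the
kernel `K = xy - t (x + y + x²y²)` and `L(0) = 0`, then `L = 0`: when all lower coefficients are
zero, `[tⁿ] N = ℓₙ(x) - ℓₙ(y)` with `ℓₙ = [tⁿ] L`, and the coefficient of `tⁿ⁺¹` at `y = 0` reads
`x (ℓₙ(x) - ℓₙ(0)) = 0`. -/
lemma invariant_eq_zero {L : ℚ⟦X⟧⟦X⟧} {N : ℚ⟦X⟧⟦X⟧⟦X⟧} (hL : map constantCoeff L = 0)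
    (h : C (C X * X) * (map C L - map (map C) L) =
      (C (C X * X) - X * C (C X + X + (C X * X) ^ 2)) * N) : L = 0 := by
  have hxy : (C X * X : ℚ⟦X⟧⟦X⟧) ≠ 0 :=
    mul_ne_zero (fun h0 => X_ne_zero (C_injective (h0.trans (map_zero C).symm))) X_ne_zero
  have h' : C (C X * X) * (map C L - map (map C) L) =
      C (C X * X) * N - X * (C (C X + X + (C X * X) ^ 2) * N) := by
    rw [h]
    ring
  have hzero := congrArg (coeff 0) h'
  have hsucc := fun n => congrArg (coeff (n + 1)) h'
  simp only [coeff_succ_X_mul, map_sub, coeff_C_mul, coeff_map, coeff_zero_X_mul, sub_zero]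
    at hzero hsucc
  have key : ∀ n, coeff n N = C (coeff n L) - map C (coeff n L) → coeff n L = 0 := by
    intro n hn
    have h1 := congrArg (constantCoeff (R := ℚ⟦X⟧)) (hsucc n)
    have h2 : constantCoeff (coeff n L) = 0 := by
      rw [← coeff_map, hL, map_zero]
    have h3 : constantCoeff (map (C (R := ℚ)) (coeff n L)) = 0 := by
      rw [← coeff_zero_eq_constantCoeff_apply, coeff_map, coeff_zero_eq_constantCoeff_apply, h2,
        map_zero]
    simpa [hn, h3] using h1
  have hall : ∀ n, coeff n N = C (coeff n L) - map C (coeff n L) := by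
    intro n
    induction n with
    | zero => exact (mul_left_cancel₀ hxy hzero).symm
    | succ n ih =>
      have hs := hsucc n
      have hN : coeff n N = 0 := by rw [ih, key n ih, map_zero, map_zero, sub_zero]
      rw [hN, mul_zero, sub_zero] at hs
      exact (mul_left_cancel₀ hxy hs).symm
  ext1 n
  rw [key n (hall n), map_zero]

/-- The generating function of walks ending on the axis satisfies the catalytic equation. Put
`I(x) = t x F(x,0) + 1/x - 1/(2t)` and `J(x) = t/x² - 1/x - t x`. Modulo the kernel
`K = xy - t (x + y + x²y²)`, the functional equation gives `I(x) = -I(y)`, while `J(x) = J(y)`; so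
`L = I² - J/t`, normalised to vanish at `x = 0`, is an invariant without pole, hence `L = 0`. -/
lemma catalyticEq_axisGF : CatalyticEq axisGF := by
  set L : ℚ⟦X⟧⟦X⟧ := X ^ 2 * C X ^ 2 * axisGF ^ 2 + (2 * X - C X) * axisGF + C X
    - 2 * X * map C (map constantCoeff axisGF) with hLdef
  have hmap : ∀ S : ℚ⟦X⟧, map constantCoeff (map (C (R := ℚ)) S) = S := by
    intro S
    ext
    simp
  have hL0 : map constantCoeff L = 0 := by
    simp only [hLdef, map_add, map_sub, map_mul, map_pow, map_X, map_C, map_ofNat, hmap,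
      constantCoeff_X, map_zero]
    ring
  have hconst : map (map C) (map (C (R := ℚ)) (map constantCoeff axisGF))
      = map C (map (C (R := ℚ)) (map constantCoeff axisGF)) := by
    ext1 n
    simp
  have hL : L = 0 := by
    -- The cofactor of the kernel `K` in `xy (L(x) - L(y))`, obtained by writing
    -- `I(x) + I(y) = -K (F + 1/(txy))` and `J(x) - J(y) = (x - y) K / (x²y²)`.
    refine invariant_eq_zero (N := -(quadrantGF * (X * C (C X) * C X *
        (C (C X) * map C axisGF - C X * map (map C) axisGF) + C X - C (C X))
        + C (C X) * map C axisGF - C X * map (map C) axisGF)) hL0 ?_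
    have hE := functional_equation
    simp only [hLdef, map_add, map_sub, map_mul, map_pow, map_X, map_C, map_ofNat, hconst] at hE ⊢
    linear_combination (X * C (C X) * C X *
        (C (C X) * map C axisGF - C X * map (map C) axisGF) + C X - C (C X)) * hE
  unfold CatalyticEq
  linear_combination -hL

end

open PowerSeries in
/-- `F(t;0,0)` is a root of `64t⁶T³ + 16t³T² + (1 − 72t³)T + 54t³ − 1`. -/
theorem kreweras_excursions_cubic :
    64 * (X : PowerSeries ℚ) ^ 6 * KrewerasGF00 ^ 3
      + 16 * X ^ 3 * KrewerasGF00 ^ 2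
      + (1 - 72 * X ^ 3) * KrewerasGF00
      + 54 * X ^ 3 - 1 = 0 := by
  obtain ⟨U, hU⟩ := exists_U
  obtain ⟨P, hP, hP0⟩ := exists_catalyticEq hU
  refine cubic_of_U hU ?_
  rw [← hP0, ← catalyticEq_axisGF.unique hP, map_constantCoeff_axisGF]
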